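/- arXiv:2505.22684 — 6 statements merged into one kernel-verified Lean document; each statement's English description precedes it below -/
import Mathlib

section
/- (Nonnegativity part of Theorem 1.) For any community partition 𝒞 of V, the fairness-modularity satisfies Q^P ≥ 0. -/
open Finset

/-- (Nonnegativity part of Theorem 1.) For any community partition 𝒞 of V, the
fairness-modularity satisfies Q^P ≥ 0. -/
theorem fairness_modularity_nonneg
    {V : Type*} [Fintype V] [DecidableEq V]
    (n : ℕ) (hn : Fintype.card V = n) (hn1 : 1 ≤ n)
    (k r : ℕ) (C : Fin k → Finset V) (P : Fin r → Finset V)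
    (hCne : ∀ u, (C u).Nonempty)
    (hCdisj : ∀ u u', u ≠ u' → Disjoint (C u) (C u'))
    (hCunion : ∀ v : V, ∃ u, v ∈ C u)
    (hPne : ∀ w, (P w).Nonempty)
    (hPdisj : ∀ w w', w ≠ w' → Disjoint (P w) (P w'))
    (hPunion : ∀ v : V, ∃ w, v ∈ P w)
    (mP : ℝ) (hmP : mP = (1/2) * ∑ w, ((P w).card : ℝ)^2)
    (QP : ℝ)
    (hQP : QP = (1/(2*mP)) *
      ((∑ u, ∑ w, ((C u ∩ P w).card : ℝ)^2)
        - (1/(2*mP)) * ∑ u, (∑ w, ((C u ∩ P w).card : ℝ) * ((P w).card : ℝ))^2)) :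
    0 ≤ QP := by
  have h2 : 2 * mP = ∑ w, ((P w).card : ℝ)^2 := by rw [hmP]; ring
  have hS : (0 : ℝ) ≤ ∑ w, ((P w).card : ℝ)^2 := Finset.sum_nonneg fun _ _ => sq_nonneg _
  rw [hQP, h2]
  refine mul_nonneg (one_div_nonneg.mpr hS) (sub_nonneg.mpr ?_)
  rw [one_div_mul_eq_div]
  refine div_le_of_le_mul₀ hS
    (Finset.sum_nonneg fun _ _ => Finset.sum_nonneg fun _ _ => sq_nonneg _) ?_
  rw [Finset.sum_mul]
  exact Finset.sum_le_sum fun u _ => Finset.sum_mul_sq_le_sq_mul_sq _ _ _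
end

section
/- (Theorem 1.) For any community partition 𝒞 of V, the fairness-modularity satisfies Q^P ≥ 0, and Q^P = 0 holds if and only if 𝒞 is fair, i.e. |C_u ∩ P_w| / |C_u| = |P_w| / n for every u = 1,…,k and every w = 1,…,r. -/
open Finset

/-- (Theorem 1.) Q^P ≥ 0, with Q^P = 0 iff the partition is fair. -/
theorem fairness_modularity_nonneg_and_eq_zero_iff_fair
    {V : Type*} [Fintype V] [DecidableEq V]
    (n : ℕ) (hn : Fintype.card V = n) (hn1 : 1 ≤ n)
    (k r : ℕ) (C : Fin k → Finset V) (P : Fin r → Finset V)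
    (hCne : ∀ u, (C u).Nonempty)
    (hCdisj : ∀ u u', u ≠ u' → Disjoint (C u) (C u'))
    (hCunion : ∀ v : V, ∃ u, v ∈ C u)
    (hPne : ∀ w, (P w).Nonempty)
    (hPdisj : ∀ w w', w ≠ w' → Disjoint (P w) (P w'))
    (hPunion : ∀ v : V, ∃ w, v ∈ P w)
    (mP : ℝ) (hmP : mP = (1/2) * ∑ w, ((P w).card : ℝ)^2)
    (QP : ℝ)
    (hQP : QP = (1/(2*mP)) *
      ((∑ u, ∑ w, ((C u ∩ P w).card : ℝ)^2)
        - (1/(2*mP)) * ∑ u, (∑ w, ((C u ∩ P w).card : ℝ) * ((P w).card : ℝ))^2))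
    :
    0 ≤ QP ∧
      (QP = 0 ↔ ∀ u w,
        ((C u ∩ P w).card : ℝ) / ((C u).card : ℝ) = ((P w).card : ℝ) / (n : ℝ)) := by
  have hsum : ∀ A : Finset V, ∑ w, ((A ∩ P w).card : ℝ) = (A.card : ℝ) := by
    intro A
    rw [← Nat.cast_sum, ← Finset.card_biUnion]
    · congr 2
      ext v
      simp only [Finset.mem_biUnion, Finset.mem_univ, true_and, Finset.mem_inter]
      constructor
      · rintro ⟨w, h, _⟩
        exact h
      · intro h
        obtain ⟨w, hw⟩ := hPunion v
        exact ⟨w, h, hw⟩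
    · intro w _ w' _ hne
      exact (hPdisj w w' hne).mono Finset.inter_subset_right Finset.inter_subset_right
  have hP : ∑ w, ((P w).card : ℝ) = (n : ℝ) := by
    have h := hsum Finset.univ
    simp only [Finset.univ_inter, Finset.card_univ, hn] at h
    exact h
  have hn0 : (0 : ℝ) < n := by exact_mod_cast hn1
  have hC0 : ∀ u, (0 : ℝ) < (C u).card := fun u => by exact_mod_cast (hCne u).card_pos
  have hS : 0 < ∑ w, ((P w).card : ℝ)^2 := by
    have hV : Nonempty V := Fintype.card_pos_iff.mp (by omega)
    obtain ⟨w, _⟩ := hPunion hV.some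
    refine Finset.sum_pos (fun w _ => ?_) ⟨w, Finset.mem_univ w⟩
    have : (0 : ℝ) < (P w).card := by exact_mod_cast (hPne w).card_pos
    positivity
  have h2 : 2 * mP = ∑ w, ((P w).card : ℝ)^2 := by rw [hmP]; ring
  rw [h2] at hQP
  have hC := fun u => hsum (C u)
  generalize hSdef : ∑ w, ((P w).card : ℝ)^2 = S at *
  generalize ha : (fun u w => ((C u ∩ P w).card : ℝ)) = a at *
  have ha' : ∀ u w, ((C u ∩ P w).card : ℝ) = a u w := fun u w => by rw [← ha]
  simp only [ha'] at hQP hC ⊢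
  have key : QP = (1/S) * ∑ u, ∑ w,
      (a u w - (∑ w, a u w * ((P w).card : ℝ)) / S * (P w).card)^2 := by
    rw [hQP, Finset.mul_sum, ← Finset.sum_sub_distrib]
    congr 1
    refine Finset.sum_congr rfl fun u _ => ?_
    generalize hd : ∑ w, a u w * ((P w).card : ℝ) = d
    have e : ∀ w, (a u w - d / S * (P w).card)^2
        = a u w ^ 2 - 2 * (d / S) * (a u w * (P w).card) + (d / S)^2 * ((P w).card : ℝ)^2 :=
      fun w => by ring
    simp only [e]
    rw [Finset.sum_add_distrib, Finset.sum_sub_distrib, ← Finset.mul_sum, ← Finset.mul_sum,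
      hd, hSdef]
    field_simp
    ring
  have hnn : ∀ u, 0 ≤ ∑ w, (a u w - (∑ w, a u w * ((P w).card : ℝ)) / S * (P w).card)^2 :=
    fun u => Finset.sum_nonneg fun w _ => sq_nonneg _
  refine ⟨?_, ?_⟩
  · rw [key]
    exact mul_nonneg (by positivity) (Finset.sum_nonneg fun u _ => hnn u)
  · constructor
    · intro h0 u w
      rw [key] at h0
      have h1 := (mul_eq_zero.mp h0).resolve_left (by positivity)
      have h3 := (Finset.sum_eq_zero_iff_of_nonneg (fun u _ => hnn u)).mp h1 u (Finset.mem_univ u)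
      have h4 := (Finset.sum_eq_zero_iff_of_nonneg (fun w _ => sq_nonneg _)).mp h3
      generalize (∑ w, a u w * ((P w).card : ℝ)) / S = t at h4
      have h5 : ∀ w, a u w = t * (P w).card := fun w => by
        have := pow_eq_zero_iff (two_ne_zero) |>.mp (h4 w (Finset.mem_univ w))
        linarith
      have h6 : ((C u).card : ℝ) = t * n := by
        rw [← hC u, ← hP, Finset.mul_sum]
        exact Finset.sum_congr rfl fun w _ => h5 w
      have := hC0 u
      rw [div_eq_div_iff this.ne' hn0.ne', h5, h6]
      ring
    · intro h
      rw [key]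
      have h5 : ∀ u w, a u w = (C u).card / n * (P w).card := fun u w => by
        have h7 := h u w
        have := hC0 u
        rw [div_eq_div_iff this.ne' hn0.ne'] at h7
        field_simp
        linarith
      have : ∀ u, (∑ w, a u w * ((P w).card : ℝ)) = (C u).card / n * S := fun u => by
        rw [← hSdef, Finset.mul_sum]
        refine Finset.sum_congr rfl fun w _ => ?_
        rw [h5]; ring
      refine mul_eq_zero_of_right _ (Finset.sum_eq_zero fun u _ => Finset.sum_eq_zero fun w _ => ?_)
      rw [this, h5, mul_div_cancel_right₀ _ hS.ne', sub_self]
      norm_num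
end

section
/- (Forward direction of Theorem 1.) If the community partition 𝒞 is fair, i.e. |C_u ∩ P_w| / |C_u| = |P_w| / n for every u and w, then its fairness-modularity Q^P equals 0. -/
open Finset

/-- (Forward direction of Theorem 1.) If the community partition is fair, then Q^P = 0. -/
theorem fairness_modularity_eq_zero_of_fair
    {V : Type*} [Fintype V] [DecidableEq V]
    (n : ℕ) (hn : Fintype.card V = n) (hn1 : 1 ≤ n)
    (k r : ℕ) (C : Fin k → Finset V) (P : Fin r → Finset V)
    (hCne : ∀ u, (C u).Nonempty)
    (hCdisj : ∀ u u', u ≠ u' → Disjoint (C u) (C u'))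
    (hCunion : ∀ v : V, ∃ u, v ∈ C u)
    (hPne : ∀ w, (P w).Nonempty)
    (hPdisj : ∀ w w', w ≠ w' → Disjoint (P w) (P w'))
    (hPunion : ∀ v : V, ∃ w, v ∈ P w)
    (mP : ℝ) (hmP : mP = (1/2) * ∑ w, ((P w).card : ℝ)^2)
    (QP : ℝ)
    (hQP : QP = (1/(2*mP)) *
      ((∑ u, ∑ w, ((C u ∩ P w).card : ℝ)^2)
        - (1/(2*mP)) * ∑ u, (∑ w, ((C u ∩ P w).card : ℝ) * ((P w).card : ℝ))^2))
    (hfair : ∀ u w,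
      ((C u ∩ P w).card : ℝ) / ((C u).card : ℝ) = ((P w).card : ℝ) / (n : ℝ)) :
    QP = 0 := by
  by_cases hm : mP = 0
  · rw [hQP, hm]; simp
  have hS : ∑ w, ((P w).card : ℝ)^2 = 2 * mP := by rw [hmP]; ring
  have hn0 : (n : ℝ) ≠ 0 := by
    have : n ≠ 0 := by omega
    exact_mod_cast this
  have key : ∀ u w, ((C u ∩ P w).card : ℝ) = ((C u).card : ℝ) / n * ((P w).card : ℝ) := by
    intro u w
    have hc : ((C u).card : ℝ) ≠ 0 := by
      have := (hCne u).card_pos.ne'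
      exact_mod_cast this
    rw [(div_eq_iff hc).mp (hfair u w)]
    ring
  have h1 : ∀ u, ∑ w, ((C u ∩ P w).card : ℝ)^2 = (((C u).card : ℝ) / n)^2 * (2 * mP) := by
    intro u
    rw [← hS, Finset.mul_sum]
    refine Finset.sum_congr rfl fun w _ => ?_
    rw [key]; ring
  have h2 : ∀ u, ∑ w, ((C u ∩ P w).card : ℝ) * ((P w).card : ℝ)
      = ((C u).card : ℝ) / n * (2 * mP) := by
    intro u
    rw [← hS, Finset.mul_sum]
    refine Finset.sum_congr rfl fun w _ => ?_
    rw [key]; ring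
  have h3 : (∑ u, ∑ w, ((C u ∩ P w).card : ℝ)^2)
      = (1/(2*mP)) * ∑ u, (∑ w, ((C u ∩ P w).card : ℝ) * ((P w).card : ℝ))^2 := by
    rw [Finset.mul_sum]
    refine Finset.sum_congr rfl fun u _ => ?_
    rw [h1, h2]
    have alg : ∀ a m : ℝ, m ≠ 0 → a^2 * m = 1 / m * (a * m)^2 := by
      clear * -
      intro a m h
      field_simp
    exact alg _ _ (mul_ne_zero two_ne_zero hm)
  rw [hQP, h3, sub_self, mul_zero]
end

section
/- (Converse direction of Theorem 1.) If the fairness-modularity Q^P of the community partition 𝒞 equals 0, then 𝒞 is fair, i.e. |C_u ∩ P_w| / |C_u| = |P_w| / n for every u = 1,…,k and every w = 1,…,r. -/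
open Finset

/-- (Converse direction of Theorem 1.) If Q^P = 0, then the community partition is fair. -/
theorem fair_of_fairness_modularity_eq_zero
    {V : Type*} [Fintype V] [DecidableEq V]
    (n : ℕ) (hn : Fintype.card V = n) (hn1 : 1 ≤ n)
    (k r : ℕ) (C : Fin k → Finset V) (P : Fin r → Finset V)
    (hCne : ∀ u, (C u).Nonempty)
    (hCdisj : ∀ u u', u ≠ u' → Disjoint (C u) (C u'))
    (hCunion : ∀ v : V, ∃ u, v ∈ C u)
    (hPne : ∀ w, (P w).Nonempty)
    (hPdisj : ∀ w w', w ≠ w' → Disjoint (P w) (P w'))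
    (hPunion : ∀ v : V, ∃ w, v ∈ P w)
    (mP : ℝ) (hmP : mP = (1/2) * ∑ w, ((P w).card : ℝ)^2)
    (QP : ℝ)
    (hQP : QP = (1/(2*mP)) *
      ((∑ u, ∑ w, ((C u ∩ P w).card : ℝ)^2)
        - (1/(2*mP)) * ∑ u, (∑ w, ((C u ∩ P w).card : ℝ) * ((P w).card : ℝ))^2))
    (hQP0 : QP = 0) :
    ∀ u w,
      ((C u ∩ P w).card : ℝ) / ((C u).card : ℝ) = ((P w).card : ℝ) / (n : ℝ) := by
  intro u w
  have hS : 0 < ∑ w, ((P w).card : ℝ)^2 := by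
    refine Finset.sum_pos (fun w _ => ?_) ⟨w, Finset.mem_univ w⟩
    have := (hPne w).card_pos
    positivity
  have hm : 2 * mP = ∑ w, ((P w).card : ℝ)^2 := by rw [hmP]; ring
  rw [hm] at hQP
  generalize hSd : ∑ w, ((P w).card : ℝ)^2 = S at *
  have hS0 : S ≠ 0 := hS.ne'
  have h1 : (∑ u, ∑ w, ((C u ∩ P w).card : ℝ)^2)
        - (1/S) * ∑ u, (∑ w, ((C u ∩ P w).card : ℝ) * ((P w).card : ℝ))^2 = 0 := by
    rw [hQP0] at hQP
    rcases mul_eq_zero.mp hQP.symm with h | h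
    · exact absurd h (one_div_ne_zero hS0)
    · exact h
  have key : ∀ u, ∑ w, (((C u ∩ P w).card : ℝ)
      - (∑ w, ((C u ∩ P w).card : ℝ) * ((P w).card : ℝ)) / S * ((P w).card : ℝ))^2
      = ∑ w, ((C u ∩ P w).card : ℝ)^2
        - (1/S) * (∑ w, ((C u ∩ P w).card : ℝ) * ((P w).card : ℝ))^2 := by
    intro u
    generalize ht : ∑ w, ((C u ∩ P w).card : ℝ) * ((P w).card : ℝ) = t
    have e : ∀ w, (((C u ∩ P w).card : ℝ) - t / S * ((P w).card : ℝ))^2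
        = ((C u ∩ P w).card : ℝ)^2
          - (2 * t / S) * (((C u ∩ P w).card : ℝ) * ((P w).card : ℝ))
          + (t/S)^2 * ((P w).card : ℝ)^2 := fun w => by ring
    simp_rw [e]
    rw [Finset.sum_add_distrib, Finset.sum_sub_distrib, ← Finset.mul_sum, ← Finset.mul_sum,
      ht, hSd]
    field_simp
    ring
  rw [Finset.mul_sum, ← Finset.sum_sub_distrib] at h1
  simp_rw [← key] at h1
  have h2 := (Finset.sum_eq_zero_iff_of_nonneg
    (fun u _ => Finset.sum_nonneg (fun w _ => sq_nonneg _))).mp h1 u (Finset.mem_univ u)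
  generalize (∑ w, ((C u ∩ P w).card : ℝ) * ((P w).card : ℝ)) / S = l at h2
  have h3 : ∀ w, ((C u ∩ P w).card : ℝ) = l * ((P w).card : ℝ) := fun w => by
    have := (Finset.sum_eq_zero_iff_of_nonneg (fun w _ => sq_nonneg _)).mp h2 w
      (Finset.mem_univ w)
    exact sub_eq_zero.mp (pow_eq_zero_iff (two_ne_zero) |>.mp this)
  have hsum : ∀ A : Finset V, ∑ w, ((A ∩ P w).card : ℝ) = (A.card : ℝ) := by
    intro A
    rw [← Nat.cast_sum, ← Finset.card_biUnion]
    · congr 2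
      ext v
      simp only [Finset.mem_biUnion, Finset.mem_univ, true_and, Finset.mem_inter]
      constructor
      · rintro ⟨_, h, _⟩; exact h
      · intro h
        obtain ⟨w, hw⟩ := hPunion v
        exact ⟨w, h, hw⟩
    · intro i _ j _ hij
      exact (hPdisj i j hij).mono Finset.inter_subset_right Finset.inter_subset_right
  have hn' : ∑ w, ((P w).card : ℝ) = (n : ℝ) := by
    have := hsum Finset.univ
    simpa [Finset.card_univ, hn] using this
  have hC : ((C u).card : ℝ) = l * n := by
    rw [← hsum (C u), ← hn', Finset.mul_sum]
    exact Finset.sum_congr rfl fun w _ => h3 w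
  have hCpos : (0:ℝ) < (C u).card := by exact_mod_cast (hCne u).card_pos
  have hnpos : (0:ℝ) < n := by exact_mod_cast hn1
  rw [div_eq_div_iff hCpos.ne' hnpos.ne', h3 w, hC]
  ring
end

section
/- (Corollary: range of fairness-modularity.) For any community partition 𝒞 of V, the fairness-modularity satisfies 0 ≤ Q^P ≤ 1 − 1/(2 m^P). -/
open Finset

/-- (Corollary: range of fairness-modularity.) 0 ≤ Q^P ≤ 1 − 1/(2 m^P). -/
theorem fairness_modularity_range
    {V : Type*} [Fintype V] [DecidableEq V]
    (n : ℕ) (hn : Fintype.card V = n) (hn1 : 1 ≤ n)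
    (k r : ℕ) (C : Fin k → Finset V) (P : Fin r → Finset V)
    (hCne : ∀ u, (C u).Nonempty)
    (hCdisj : ∀ u u', u ≠ u' → Disjoint (C u) (C u'))
    (hCunion : ∀ v : V, ∃ u, v ∈ C u)
    (hPne : ∀ w, (P w).Nonempty)
    (hPdisj : ∀ w w', w ≠ w' → Disjoint (P w) (P w'))
    (hPunion : ∀ v : V, ∃ w, v ∈ P w)
    (mP : ℝ) (hmP : mP = (1/2) * ∑ w, ((P w).card : ℝ)^2)
    (QP : ℝ)
    (hQP : QP = (1/(2*mP)) *
      ((∑ u, ∑ w, ((C u ∩ P w).card : ℝ)^2)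
        - (1/(2*mP)) * ∑ u, (∑ w, ((C u ∩ P w).card : ℝ) * ((P w).card : ℝ))^2))
    :
    0 ≤ QP ∧ QP ≤ 1 - 1/(2*mP) := by
  have hsum : ∀ w, ∑ u, ((C u ∩ P w).card : ℝ) = ((P w).card : ℝ) := by
    intro w
    have h : (P w) = Finset.univ.biUnion (fun u => C u ∩ P w) := by
      ext v
      obtain ⟨u, hu⟩ := hCunion v
      simp only [Finset.mem_biUnion, Finset.mem_univ, true_and, Finset.mem_inter]
      exact ⟨fun hv => ⟨u, hu, hv⟩, fun ⟨_, _, hv⟩ => hv⟩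
    have h2 : (Finset.univ.biUnion (fun u => C u ∩ P w)).card = ∑ u, (C u ∩ P w).card := by
      apply Finset.card_biUnion
      intro u _ u' _ huu
      exact (hCdisj u u' huu).mono Finset.inter_subset_left Finset.inter_subset_left
    rw [← h] at h2
    rw [h2]
    push_cast
    rfl
  have hM2 : 2 * mP = ∑ w, ((P w).card : ℝ)^2 := by rw [hmP]; ring
  rw [hM2] at hQP ⊢
  set M : ℝ := ∑ w, ((P w).card : ℝ)^2 with hM
  have hMpos : 0 < M := by
    have hV : 0 < Fintype.card V := by omega
    obtain ⟨v⟩ := Fintype.card_pos_iff.mp hV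
    obtain ⟨w, _⟩ := hPunion v
    apply Finset.sum_pos
    · intro w _
      have := Finset.card_pos.mpr (hPne w)
      positivity
    · exact ⟨w, Finset.mem_univ w⟩
  have hd : ∑ u, ∑ w, ((C u ∩ P w).card : ℝ) * ((P w).card : ℝ) = M := by
    rw [Finset.sum_comm, hM]
    refine Finset.sum_congr rfl fun w _ => ?_
    rw [← Finset.sum_mul, hsum w, sq]
  have hA : ∑ u, ∑ w, ((C u ∩ P w).card : ℝ)^2 ≤ M := by
    rw [← hd]
    refine Finset.sum_le_sum fun u _ => Finset.sum_le_sum fun w _ => ?_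
    rw [sq]
    have : ((C u ∩ P w).card : ℝ) ≤ ((P w).card : ℝ) := by
      exact_mod_cast Finset.card_le_card Finset.inter_subset_right
    gcongr
  have hD : M ≤ ∑ u, (∑ w, ((C u ∩ P w).card : ℝ) * ((P w).card : ℝ))^2 := by
    rw [← hd]
    refine Finset.sum_le_sum fun u _ => ?_
    exact_mod_cast Nat.le_self_pow two_ne_zero (∑ w, (C u ∩ P w).card * (P w).card)
  have hCS : ∑ u, (∑ w, ((C u ∩ P w).card : ℝ) * ((P w).card : ℝ))^2
      ≤ (∑ u, ∑ w, ((C u ∩ P w).card : ℝ)^2) * M := by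
    rw [Finset.sum_mul]
    exact Finset.sum_le_sum fun u _ => Finset.sum_mul_sq_le_sq_mul_sq _ _ _
  generalize (∑ u, ∑ w, ((C u ∩ P w).card : ℝ)^2) = A at *
  generalize (∑ u, (∑ w, ((C u ∩ P w).card : ℝ) * ((P w).card : ℝ))^2) = D at *
  have h1 : (1 / M) * D ≤ A := by
    rw [one_div_mul_eq_div, div_le_iff₀ hMpos]; exact hCS
  have h2 : 1 ≤ (1 / M) * D := by
    rw [one_div_mul_eq_div, le_div_iff₀ hMpos]; linarith
  rw [hQP]
  constructor
  · exact mul_nonneg (by positivity) (by linarith)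
  · have h3 : (1 / M) * (A - 1 / M * D) ≤ (1 / M) * (M - 1) :=
      mul_le_mul_of_nonneg_left (by linarith) (by positivity)
    have h4 : (1 / M) * (M - 1) = 1 - 1 / M := by field_simp
    linarith
end

section
/- (Modularity increment under merging two communities, as used by the Fast Newman update.) Let A be the symmetric 0/1 adjacency matrix of an undirected graph on n vertices with degrees k_i = Σ_j A_{ij} and 2m = Σ_i k_i, m > 0. For a partition 𝒞 of the vertices, define Q(𝒞) = (1/(2m))·Σ_{i,j : i,j in the same community} [A_{ij} − k_i k_j/(2m)]. Let 𝒞' be obtained from 𝒞 by merging two distinct communities C_s and C_t into C_s ∪ C_t. Then Q(𝒞') − Q(𝒞) = 2·(e_{st} − a_s a_t), where e_{st} = (1/(2m))·Σ_{i ∈ C_s} Σ_{j ∈ C_t} A_{ij}, a_s = (1/(2m))·Σ_{i ∈ C_s} k_i and a_t = (1/(2m))·Σ_{i ∈ C_t} k_i. -/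
open Finset

/-- (Modularity increment under merging two communities, as used by the Fast Newman
update.) Merging distinct communities C_s and C_t changes the modularity by
Q(𝒞') − Q(𝒞) = 2·(e_{st} − a_s a_t). -/
theorem modularity_increment_merge
    {V : Type*} [Fintype V] [DecidableEq V]
    (A : Matrix V V ℝ)
    (hA01 : ∀ i j, A i j = 0 ∨ A i j = 1)
    (hAsymm : ∀ i j, A i j = A j i)
    (deg : V → ℝ) (hdeg : ∀ i, deg i = ∑ j, A i j)
    (m : ℝ) (hm : 2 * m = ∑ i, deg i) (hmpos : 0 < m)
    (k : ℕ) (C : Fin k → Finset V)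
    (hCne : ∀ u, (C u).Nonempty)
    (hCdisj : ∀ u u', u ≠ u' → Disjoint (C u) (C u'))
    (hCunion : ∀ v : V, ∃ u, v ∈ C u)
    (s t : Fin k) (hst : s ≠ t)
    (Q Q' eST aS aT : ℝ)
    (hQ : Q = (1/(2*m)) *
      ∑ u, ∑ i ∈ C u, ∑ j ∈ C u, (A i j - deg i * deg j / (2*m)))
    (hQ' : Q' = (1/(2*m)) *
      ((∑ u ∈ Finset.univ.filter (fun u => u ≠ s ∧ u ≠ t),
          ∑ i ∈ C u, ∑ j ∈ C u, (A i j - deg i * deg j / (2*m)))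
        + ∑ i ∈ C s ∪ C t, ∑ j ∈ C s ∪ C t, (A i j - deg i * deg j / (2*m))))
    (heST : eST = (1/(2*m)) * ∑ i ∈ C s, ∑ j ∈ C t, A i j)
    (haS : aS = (1/(2*m)) * ∑ i ∈ C s, deg i)
    (haT : aT = (1/(2*m)) * ∑ i ∈ C t, deg i) :
    Q' - Q = 2 * (eST - aS * aT) := by
  have hsplit : ∀ F : Fin k → ℝ, ∑ u, F u =
      (∑ u ∈ Finset.univ.filter (fun u => u ≠ s ∧ u ≠ t), F u) + (F s + F t) := by
    intro F
    rw [← Finset.sum_filter_add_sum_filter_not Finset.univ (fun u => u ≠ s ∧ u ≠ t) F]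
    congr 1
    rw [← Finset.sum_pair hst]
    apply Finset.sum_congr _ (fun _ _ => rfl)
    ext u
    simp only [Finset.mem_filter, Finset.mem_univ, true_and, Finset.mem_insert,
      Finset.mem_singleton]
    tauto
  have hd := hCdisj s t hst
  have hcross : ∑ i ∈ C s, ∑ j ∈ C t, (A i j - deg i * deg j / (2*m)) =
      (∑ i ∈ C s, ∑ j ∈ C t, A i j) - (∑ i ∈ C s, deg i) * (∑ j ∈ C t, deg j) / (2*m) := by
    simp only [Finset.sum_sub_distrib]
    rw [Finset.sum_mul_sum, Finset.sum_div]
    simp only [Finset.sum_div]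
  have hsym : ∑ i ∈ C t, ∑ j ∈ C s, (A i j - deg i * deg j / (2*m)) =
      ∑ i ∈ C s, ∑ j ∈ C t, (A i j - deg i * deg j / (2*m)) := by
    rw [Finset.sum_comm]
    refine Finset.sum_congr rfl fun i _ => Finset.sum_congr rfl fun j _ => ?_
    rw [hAsymm j i, mul_comm (deg j)]
  rw [hsplit] at hQ
  simp only [Finset.sum_union hd, Finset.sum_add_distrib] at hQ'
  rw [hsym, hcross] at hQ'
  rw [hQ, hQ', heST, haS, haT]
  ring
end
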